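/- Let n ≥ 3 be even. Then there exist exactly 2 functions σ : (ZMod n) × Bool → ZMod 3 with all values in {1, 2} ⊆ ZMod 3 that satisfy σ(i,false) + σ(i,true) + σ(i+1,true) + σ(i+1,false) = 0 for every i ∈ ZMod n and for which σ(i,false) = σ(i,true) holds for some index i; these two functions are negatives of each other and satisfy σ(i+1,false) = σ(i+1,true) = −σ(i,false) for all i. -/

import Mathlib

/-- `σ` has all values in `{1, 2} ⊆ ZMod 3`, satisfies the propriety conditions of the
quadrilateral faces of `CL_n`, and takes equal values at the two endpoints of some rung. -/
def IsQuadProperWithEqualRung (n : ℕ) (σ : ZMod n × Bool → ZMod 3) : Prop :=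
  (∀ v, σ v = 1 ∨ σ v = 2) ∧
  (∀ i : ZMod n,
    σ (i, false) + σ (i, true) + σ (i + 1, true) + σ (i + 1, false) = 0) ∧
  (∃ i : ZMod n, σ (i, false) = σ (i, true))

/-!
Since the labels are nonzero, a face with equal labels `a`, `a` on one rung has `-a`, `-a` on the
next: the other two labels sum to `a` in `ZMod 3`, and of the pairs of nonzero elements only
`-a`, `-a` does. So one equal rung forces every rung to be equal, with a common label that changes
sign at each step around the cycle. For even `n` such a sign-alternating labelling closes up, and it
is determined by its label at `0`, which is `1` or `-1`.
-/

section

variable {n : ℕ}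

theorem forall_zmod_of_forall_add_one [NeZero n] {p : ZMod n → Prop} {j : ZMod n} (base : p j)
    (step : ∀ i, p i → p (i + 1)) (i : ZMod n) : p i := by
  have shifted (k : ℕ) : p (j + k) := by
    induction k with
    | zero => rwa [Nat.cast_zero, add_zero]
    | succ k ih =>
      rw [Nat.cast_succ, ← add_assoc]
      exact step _ ih
  obtain ⟨k, hk⟩ := ZMod.natCast_zmod_surjective (i - j)
  rw [← add_sub_cancel j i, ← hk]
  exact shifted k

theorem antiperiodic_neg_one_pow_val [NeZero n] {R : Type*} [Monoid R] [HasDistribNeg R]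
    (hn : Even n) : Function.Antiperiodic (fun i : ZMod n => (-1 : R) ^ i.val) 1 := by
  have pow_val_natCast (k : ℕ) : (-1 : R) ^ (k : ZMod n).val = (-1) ^ k := by
    rw [ZMod.val_natCast, ← pow_eq_pow_mod k hn.neg_one_pow]
  intro i
  obtain ⟨k, rfl⟩ := ZMod.natCast_zmod_surjective i
  simp only [← Nat.cast_succ, pow_val_natCast, pow_succ, mul_neg_one]

theorem eq_of_antiperiodic_one [NeZero n] {G : Type*} [Neg G] {f g : ZMod n → G}
    (hf : Function.Antiperiodic f 1) (hg : Function.Antiperiodic g 1) (h0 : f 0 = g 0) :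
    f = g :=
  funext <| forall_zmod_of_forall_add_one h0 fun i hi => by rw [hf, hg, hi]

theorem eq_neg_and_eq_neg_of_add_self {a c d : ZMod 3} (ha : a ≠ 0) (hc : c ≠ 0)
    (hd : d ≠ 0) (h : a + a + c + d = 0) : c = -a ∧ d = -a := by
  revert a c d
  decide

/-- The labelling of `CL_n` whose value on both ends of rung `i` is the sign `(-1) ^ i`, computed
from the representative of `i` in `{0, …, n - 1}`; it alternates around the cycle when `n` is
even. -/
def alternatingLabelling (n : ℕ) (v : ZMod n × Bool) : ZMod 3 :=
  (-1) ^ v.1.val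

theorem alternatingLabelling_apply_zero (n : ℕ) (b : Bool) : alternatingLabelling n (0, b) = 1 := by
  rw [alternatingLabelling, ZMod.val_zero, pow_zero]

theorem alternatingLabelling_ne_neg (n : ℕ) :
    alternatingLabelling n ≠ -alternatingLabelling n := by
  intro h
  have h0 : alternatingLabelling n (0, false) = -alternatingLabelling n (0, false) :=
    congrFun h (0, false)
  rw [alternatingLabelling_apply_zero] at h0
  exact absurd h0 (by decide)

namespace IsQuadProperWithEqualRung

variable {σ : ZMod n × Bool → ZMod 3}

theorem ne_zero (h : IsQuadProperWithEqualRung n σ) (v : ZMod n × Bool) : σ v ≠ 0 := by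
  rcases h.1 v with hv | hv <;> rw [hv] <;> decide

theorem neg (h : IsQuadProperWithEqualRung n σ) : IsQuadProperWithEqualRung n (-σ) := by
  obtain ⟨values, faces, i, hi⟩ := h
  refine ⟨fun v => ?_, fun i => ?_, i, congrArg (-·) hi⟩
  · rcases values v with hv | hv <;> rw [Pi.neg_apply, hv] <;> decide
  · simp only [Pi.neg_apply]
    linear_combination -faces i

theorem next_rung (h : IsQuadProperWithEqualRung n σ) {i : ZMod n}
    (hi : σ (i, false) = σ (i, true)) :
    σ (i + 1, false) = -σ (i, false) ∧ σ (i + 1, true) = -σ (i, false) := by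
  have face := h.2.1 i
  rw [← hi] at face
  exact (eq_neg_and_eq_neg_of_add_self (h.ne_zero _) (h.ne_zero _) (h.ne_zero _) face).symm

variable [NeZero n]

theorem rung_eq (h : IsQuadProperWithEqualRung n σ) (i : ZMod n) :
    σ (i, false) = σ (i, true) := by
  obtain ⟨j, hj⟩ := h.2.2
  refine forall_zmod_of_forall_add_one (p := fun k => σ (k, false) = σ (k, true)) hj
    (fun k hk => ?_) i
  obtain ⟨hfalse, htrue⟩ := h.next_rung hk
  exact hfalse.trans htrue.symm

theorem antiperiodic (h : IsQuadProperWithEqualRung n σ) :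
    Function.Antiperiodic (fun i => σ (i, false)) 1 :=
  fun i => (h.next_rung (h.rung_eq i)).1

theorem eq_of_apply_zero_eq {τ : ZMod n × Bool → ZMod 3} (hσ : IsQuadProperWithEqualRung n σ)
    (hτ : IsQuadProperWithEqualRung n τ) (h0 : σ (0, false) = τ (0, false)) : σ = τ := by
  have on_false (i : ZMod n) : σ (i, false) = τ (i, false) :=
    congrFun (eq_of_antiperiodic_one hσ.antiperiodic hτ.antiperiodic h0) i
  funext ⟨i, b⟩
  cases b with
  | false => exact on_false i
  | true => rw [← hσ.rung_eq, ← hτ.rung_eq, on_false]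

end IsQuadProperWithEqualRung

variable [NeZero n]

theorem isQuadProperWithEqualRung_alternatingLabelling (hn : Even n) :
    IsQuadProperWithEqualRung n (alternatingLabelling n) := by
  refine ⟨fun v => neg_one_pow_eq_or (ZMod 3) v.1.val, fun i => ?_, 0, rfl⟩
  have alternates (b : Bool) :
      alternatingLabelling n (i + 1, b) = -alternatingLabelling n (i, b) :=
    antiperiodic_neg_one_pow_val hn i
  rw [alternates, alternates]
  ring

theorem isQuadProperWithEqualRung_iff (hn : Even n) {σ : ZMod n × Bool → ZMod 3} :
    IsQuadProperWithEqualRung n σ ↔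
      σ = alternatingLabelling n ∨ σ = -alternatingLabelling n := by
  have alternating := isQuadProperWithEqualRung_alternatingLabelling hn
  constructor
  · intro h
    refine (h.1 (0, false)).imp (fun h0 => ?_) (fun h0 => ?_)
    · refine h.eq_of_apply_zero_eq alternating ?_
      rw [h0, alternatingLabelling_apply_zero]
    · refine h.eq_of_apply_zero_eq alternating.neg ?_
      rw [h0, Pi.neg_apply, alternatingLabelling_apply_zero]
      decide
  · rintro (rfl | rfl)
    exacts [alternating, alternating.neg]

end

/-- For even `n ≥ 3`, there are exactly 2 functions `σ : (ZMod n) × Bool → ZMod 3` with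
all values in `{1, 2}` satisfying the propriety conditions of the quadrilateral faces of
`CL_n` and having `σ (i, false) = σ (i, true)` for some `i`; these two functions are
negatives of each other, and each satisfies
`σ (i+1, false) = σ (i+1, true) = -σ (i, false)` for all `i`. -/
theorem heawood_quad_even_equal_rung (n : ℕ) (hn : 3 ≤ n) (hpar : Even n) :
    Nat.card {σ : ZMod n × Bool → ZMod 3 // IsQuadProperWithEqualRung n σ} = 2 ∧
    (∀ σ τ : ZMod n × Bool → ZMod 3, IsQuadProperWithEqualRung n σ →
      IsQuadProperWithEqualRung n τ → σ ≠ τ → τ = -σ) ∧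
    (∀ σ : ZMod n × Bool → ZMod 3, IsQuadProperWithEqualRung n σ →
      ∀ i : ZMod n,
        σ (i + 1, false) = -σ (i, false) ∧ σ (i + 1, true) = -σ (i, false)) := by
  have : NeZero n := ⟨by lia⟩
  refine ⟨?_, fun σ τ hσ hτ hne => ?_, fun σ hσ i => hσ.next_rung (hσ.rung_eq i)⟩
  · have solutions : {σ | IsQuadProperWithEqualRung n σ} =
        {alternatingLabelling n, -alternatingLabelling n} :=
      Set.ext fun _ => isQuadProperWithEqualRung_iff hpar
    calc Nat.card {σ // IsQuadProperWithEqualRung n σ}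
      _ = {σ | IsQuadProperWithEqualRung n σ}.ncard := Nat.card_coe_set_eq _
      _ = 2 := by rw [solutions, Set.ncard_pair (alternatingLabelling_ne_neg n)]
  · rcases (isQuadProperWithEqualRung_iff hpar).1 hσ with rfl | rfl <;>
      rcases (isQuadProperWithEqualRung_iff hpar).1 hτ with rfl | rfl
    · exact absurd rfl hne
    · rfl
    · exact (neg_neg _).symm
    · exact absurd rfl hne
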